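/- arXiv:math-ph/0701034 — 2 statements merged into one kernel-verified Lean document; each statement's English description precedes it below -/
import Mathlib

section
/- Let A = diag(a₁,…,a_n) be a diagonal matrix with indeterminate (or positive real) entries and B an antisymmetric n×n matrix. Then det(A+B) = Σ_{I ⊆ {1,…,n}, n-|I| even} (∏_{i∈I} a_i) · Pf(B_{Î})², where B_{Î} is the matrix obtained from B by deleting the rows and columns indexed by I. -/
open Matrix

/-- The Pfaffian of an `m×m` real matrix (meaningful for antisymmetric `M` with `m` even),
given by the standard sum over permutations normalized by `2^(m/2) (m/2)!`.
By convention the Pfaffian of the empty matrix is `1`. -/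
noncomputable def pf {m : ℕ} (M : Matrix (Fin m) (Fin m) ℝ) : ℝ :=
  (1 / (2 ^ (m / 2) * ((m / 2).factorial : ℝ))) *
    ∑ σ : Equiv.Perm (Fin m), ((Equiv.Perm.sign σ : ℤ) : ℝ) *
      ∏ i : Fin (m / 2),
        M (σ ⟨2 * i.val, by have := i.isLt; omega⟩)
          (σ ⟨2 * i.val + 1, by have := i.isLt; omega⟩)

/-!
Multilinearity of the determinant in the rows expands `det (diagonal a + B)` into principal minors
of `B`. The minors of odd size vanish by antisymmetry, and those of even size are squares of
Pfaffians: over a field an alternating matrix `M` of size `2k` is `C * J * Cᵀ` for the standard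
alternating matrix `J`, and `Pf (C * J * Cᵀ) = det C * Pf J` because both sides are alternating
multilinear in the rows of `C`. Being a polynomial identity with integer coefficients, the relation
`(2 ^ k * k! * Pf M) ^ 2 = (2 ^ k * k!) ^ 2 * det M` then holds for `M = U - Uᵀ` over every
commutative ring.
-/

open Equiv Finset MultilinearMap
open scoped Kronecker

section Wreath

variable {α β : Type*}

lemma prodShear_injective [Nonempty β] :
    Function.Injective fun t : Perm α × (α → Perm β) ↦ prodShear t.1 t.2 := by
  rintro ⟨e, f⟩ ⟨e', f'⟩ h
  have happly (i : α) (j : β) : (e i, f i j) = (e' i, f' i j) := DFunLike.congr_fun h (i, j)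
  obtain ⟨j₀⟩ := ‹Nonempty β›
  exact Prod.ext (Equiv.ext fun i ↦ congrArg Prod.fst (happly i j₀))
    (funext fun i ↦ Equiv.ext fun j ↦ congrArg Prod.snd (happly i j))

lemma exists_prodShear_eq [Finite α] [Finite β] [Nonempty β] (σ : Perm (α × β))
    (hσ : ∀ i j j', (σ (i, j)).1 = (σ (i, j')).1) :
    ∃ (e : Perm α) (f : α → Perm β), prodShear e f = σ := by
  obtain ⟨j₀⟩ := ‹Nonempty β›
  have hsurj : Function.Surjective fun i ↦ (σ (i, j₀)).1 := fun a ↦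
    ⟨(σ.symm (a, j₀)).1, (hσ _ _ (σ.symm (a, j₀)).2).trans (by simp)⟩
  have hinj (i : α) : Function.Injective fun j ↦ (σ (i, j)).2 := fun j j' hj ↦
    congrArg Prod.snd (σ.injective (Prod.ext (hσ i j j') hj))
  refine ⟨.ofBijective _ (Finite.surjective_iff_bijective.1 hsurj),
    fun i ↦ .ofBijective _ (Finite.injective_iff_bijective.1 (hinj i)), Equiv.ext ?_⟩
  rintro ⟨i, j⟩
  exact Prod.ext (hσ i j₀ j) rfl

lemma sign_prodShear [Fintype α] [DecidableEq α] [Fintype β] [DecidableEq β]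
    (e : Perm α) (f : α → Perm β) :
    Perm.sign (prodShear e f : Perm (α × β)) =
      Perm.sign e ^ Fintype.card β * ∏ i, Perm.sign (f i) := by
  have hfactor : (prodShear e f : Perm (α × β)) =
      prodCongrLeft (fun _ ↦ e) * prodCongrRight f := rfl
  rw [hfactor, Perm.sign_mul, Perm.sign_prodCongrLeft, Perm.sign_prodCongrRight, prod_const,
    card_univ]

end Wreath

section PairingSum

variable {κ m R S : Type*} [CommRing R] [CommRing S]

/-- The unnormalized Pfaffian `∑ σ, sign σ ∏ i, M (σ (i, 0)) (σ (i, 1))` of a matrix whose index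
set comes with a partition into pairs `{(i, 0), (i, 1)}`. -/
def pairingSum [Fintype κ] [DecidableEq κ] (M : Matrix (κ × Fin 2) (κ × Fin 2) R) : R :=
  ∑ σ : Perm (κ × Fin 2), Perm.sign σ • ∏ i, M (σ (i, 0)) (σ (i, 1))

/-- The multilinear form `v ↦ ∏ i, v (i, 0) ⬝ᵥ M *ᵥ v (i, 1)`, whose alternatization at the rows
of `C` is `pairingSum (C * M * Cᵀ)`. -/
def pairingForm (κ : Type*) [Fintype κ] [Fintype m] (M : Matrix m m R) :
    MultilinearMap R (fun _ : κ × Fin 2 ↦ m → R) R :=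
  ((MultilinearMap.mkPiAlgebra R κ R).compMultilinearMap fun _ ↦
    MultilinearMap.mk' (ι := Fin 2) (M₁ := fun _ ↦ m → R) (fun v ↦ v 0 ⬝ᵥ M *ᵥ v 1)
      (fun v j x y ↦ by fin_cases j <;> simp [add_dotProduct, dotProduct_add, mulVec_add])
      (fun v j c x ↦ by fin_cases j <;> simp [mulVec_smul])).domDomCongr
    (sigmaEquivProd κ (Fin 2))

lemma pairingForm_apply [Fintype κ] [Fintype m] (M : Matrix m m R) (v : κ × Fin 2 → m → R) :
    pairingForm κ M v = ∏ i, v (i, 0) ⬝ᵥ M *ᵥ v (i, 1) :=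
  rfl

variable (κ R) in
/-- The standard alternating matrix, block diagonal with `2 × 2` blocks `!![0, 1; -1, 0]`. It is
`Matrix.J` up to sign and with rows and columns reordered so that paired indices are adjacent. -/
def pairedJ [DecidableEq κ] : Matrix (κ × Fin 2) (κ × Fin 2) R :=
  (1 : Matrix κ κ R) ⊗ₖ !![0, 1; -1, 0]

lemma pairedJ_apply_perm [DecidableEq κ] (i : κ) (e : Perm (Fin 2)) :
    pairedJ κ R (i, e 0) (i, e 1) = ((Perm.sign e : ℤ) : R) := by
  have he : e = 1 ∨ e = swap 0 1 := by
    revert e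
    decide
  obtain rfl | rfl := he <;> simp [pairedJ]

variable [Fintype κ] [DecidableEq κ]

lemma alternatization_pairingForm [Fintype m] (C : Matrix (κ × Fin 2) m R) (M : Matrix m m R) :
    alternatization (pairingForm κ M) C.row = pairingSum (C * M * Cᵀ) := by
  have hentry (p q : κ × Fin 2) : C.row p ⬝ᵥ M *ᵥ C.row q = (C * M * Cᵀ) p q := by
    rw [Matrix.mul_assoc]
    rfl
  simp only [alternatization_apply, domDomCongr_apply, pairingForm_apply, pairingSum, hentry]

lemma pairingSum_mul_mul_transpose (C M : Matrix (κ × Fin 2) (κ × Fin 2) R) :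
    pairingSum (C * M * Cᵀ) = C.det * pairingSum M := by
  have hone : alternatization (pairingForm κ M) (Pi.basisFun R (κ × Fin 2)) = pairingSum M := by
    have hrow : ⇑(Pi.basisFun R (κ × Fin 2)) = (1 : Matrix _ _ R).row := by
      ext p q
      simp [Matrix.one_apply, Pi.single_apply, eq_comm]
    rw [hrow, alternatization_pairingForm, one_mul, transpose_one, mul_one]
  rw [← alternatization_pairingForm,
    (alternatization (pairingForm κ M)).eq_smul_basis_det (Pi.basisFun R _), hone,
    AlternatingMap.smul_apply, Pi.basisFun_det_apply, smul_eq_mul, mul_comm]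
  rfl

lemma pairingSum_map (f : R →+* S) (M : Matrix (κ × Fin 2) (κ × Fin 2) R) :
    pairingSum (M.map f) = f (pairingSum M) := by
  simp [pairingSum, Units.smul_def]

lemma det_pairedJ : (pairedJ κ R).det = 1 := by
  simp [pairedJ, det_kronecker]

lemma sign_smul_prod_pairedJ_prodShear (e : Perm κ) (f : κ → Perm (Fin 2)) :
    Perm.sign (prodShear e f : Perm (κ × Fin 2)) •
      ∏ i, pairedJ κ R (prodShear e f (i, 0)) (prodShear e f (i, 1)) = 1 := by
  simp only [prodShear_apply, pairedJ_apply_perm]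
  rw [sign_prodShear, Fintype.card_fin, Int.units_sq, one_mul, Units.smul_def, zsmul_eq_mul,
    Units.coe_prod, Int.cast_prod, ← prod_mul_distrib]
  exact prod_eq_one fun i _ ↦ by
    rw [← Int.cast_mul, ← Units.val_mul, Int.units_mul_self, Units.val_one, Int.cast_one]

-- Only the permutations which permute the pairs contribute, each of them `1`.
lemma pairingSum_pairedJ :
    pairingSum (pairedJ κ R) = 2 ^ Fintype.card κ * (Fintype.card κ).factorial := by
  calc pairingSum (pairedJ κ R) = ∑ _t : Perm κ × (κ → Perm (Fin 2)), (1 : R) := by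
        symm
        refine Fintype.sum_of_injective _ prodShear_injective _ _ (fun σ hσ ↦ ?_)
          fun t ↦ (sign_smul_prod_pairedJ_prodShear t.1 t.2).symm
        obtain ⟨i, hi⟩ : ∃ i, (σ (i, 0)).1 ≠ (σ (i, 1)).1 := by
          by_contra! h
          obtain ⟨e, f, hef⟩ := exists_prodShear_eq σ fun i ↦ by
            simp [Fin.forall_fin_two, h]
          exact hσ ⟨(e, f), hef⟩
        rw [prod_eq_zero (mem_univ i) (by simp [pairedJ, kroneckerMap_apply, hi]), smul_zero]
    _ = _ := by simp [Fintype.card_perm, mul_comm]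

end PairingSum

section Alternating

/-- A matrix is alternating if it is antisymmetric with zero diagonal; the second condition is
automatic only when `2` is not a zero divisor. -/
structure IsAlternating {ι R : Type*} [Ring R] (M : Matrix ι ι R) : Prop where
  transpose_eq : Mᵀ = -M
  apply_self (i : ι) : M i i = 0

/-- The matrix of the exterior product of two vectors. -/
def wedge {ι R : Type*} [Ring R] (u v : ι → R) : Matrix ι ι R :=
  vecMulVec u v - vecMulVec v u

variable {ι κ R K : Type*} [CommRing R] [Field K]

lemma wedge_apply (u v : ι → R) (i j : ι) : wedge u v i j = u i * v j - v i * u j :=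
  rfl

lemma isAlternating_wedge (u v : ι → R) : IsAlternating (wedge u v) where
  transpose_eq := by simp [wedge, transpose_vecMulVec]
  apply_self i := by rw [wedge_apply]; ring

lemma isAlternating_sub_transpose (U : Matrix ι ι R) : IsAlternating (U - Uᵀ) where
  transpose_eq := by simp
  apply_self i := by simp

namespace IsAlternating

lemma sub {M N : Matrix ι ι R} (hM : IsAlternating M) (hN : IsAlternating N) :
    IsAlternating (M - N) where
  transpose_eq := by rw [transpose_sub, hM.transpose_eq, hN.transpose_eq]; abel
  apply_self i := by simp [hM.apply_self, hN.apply_self]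

lemma apply_swap {M : Matrix ι ι R} (hM : IsAlternating M) (i j : ι) : M j i = -M i j :=
  congrFun₂ hM.transpose_eq i j

lemma sub_wedge_row_eq_zero {M : Matrix ι ι K} (hM : IsAlternating M) {a b x : ι}
    (hab : M a b ≠ 0) (hx : x = a ∨ x = b ∨ M x = 0) :
    (M - wedge ((M a b)⁻¹ • M a) (M b)) x = 0 := by
  ext y
  simp only [Matrix.sub_apply, wedge_apply, Pi.smul_apply, smul_eq_mul, Pi.zero_apply]
  obtain rfl | rfl | hx := hx
  · rw [hM.apply_self, hM.apply_swap x b]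
    field_simp
    ring
  · rw [hM.apply_self]
    field_simp
    ring
  · have hcol (i : ι) : M i x = 0 := by rw [hM.apply_swap x i, hx, Pi.zero_apply, neg_zero]
    simp [hcol, hx]

-- Symplectic Gaussian elimination: a nonzero entry `M a b` lets one clear the rows `a` and `b`
-- by subtracting a single wedge.
lemma exists_eq_sum_wedge_of_rows (k : ℕ) :
    ∀ {M : Matrix ι ι K} (s : Finset ι), IsAlternating M → #s ≤ 2 * k → (∀ x ∉ s, M x = 0) →
      ∃ f g : Fin k → ι → K, M = ∑ i, wedge (f i) (g i) := by
  classical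
  induction k with
  | zero =>
    intro M s _ hs hMs
    have hs : s = ∅ := by simpa using hs
    exact ⟨0, 0, Matrix.ext fun x y ↦ by simpa using congrFun (hMs x (by simp [hs])) y⟩
  | succ k ih =>
    intro M s hM hs hMs
    by_cases h0 : M = 0
    · exact ⟨0, 0, by simp [h0, wedge]⟩
    obtain ⟨a, b, hab⟩ : ∃ a b, M a b ≠ 0 := by
      by_contra! h
      exact h0 (Matrix.ext h)
    have ha : a ∈ s := by
      by_contra ha
      exact hab (by simp [hMs a ha])
    have hb : b ∈ s := by
      by_contra hb
      exact hab (by simp [hM.apply_swap b a, hMs b hb])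
    have hne : b ≠ a := by
      rintro rfl
      exact hab (hM.apply_self b)
    have hcard : #((s.erase a).erase b) ≤ 2 * k := by
      rw [card_erase_of_mem (mem_erase.2 ⟨hne, hb⟩), card_erase_of_mem ha]
      lia
    obtain ⟨f, g, hfg⟩ := ih _ (hM.sub (isAlternating_wedge ((M a b)⁻¹ • M a) (M b))) hcard
      fun x hx ↦ hM.sub_wedge_row_eq_zero hab (by
        simp only [mem_erase] at hx
        by_contra! h
        exact hx ⟨h.2.1, h.1, not_imp_comm.1 (hMs x) h.2.2⟩)
    refine ⟨Fin.cons ((M a b)⁻¹ • M a) f, Fin.cons (M b) g, ?_⟩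
    simp only [Fin.sum_univ_succ, Fin.cons_zero, Fin.cons_succ, ← hfg, add_sub_cancel]

lemma exists_eq_sum_wedge [Fintype ι] [Fintype κ] {M : Matrix ι ι K} (hM : IsAlternating M)
    (hcard : Fintype.card ι ≤ 2 * Fintype.card κ) :
    ∃ f g : κ → ι → K, M = ∑ i, wedge (f i) (g i) := by
  classical
  obtain ⟨f, g, rfl⟩ := exists_eq_sum_wedge_of_rows (Fintype.card κ) univ hM hcard (by simp)
  let e := Fintype.equivFin κ
  exact ⟨f ∘ e, g ∘ e, (e.sum_comp fun i ↦ wedge (f i) (g i)).symm⟩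

end IsAlternating

variable [Fintype κ] [DecidableEq κ]

lemma of_mul_pairedJ_mul_transpose (f g : κ → ι → R) :
    let C : Matrix ι (κ × Fin 2) R := .of fun x p ↦ ![f p.1 x, g p.1 x] p.2
    C * pairedJ κ R * Cᵀ = ∑ i, wedge (f i) (g i) := by
  ext x y
  simp [Matrix.mul_apply, pairedJ, Matrix.sum_apply, wedge_apply, Fintype.sum_prod_type,
    Matrix.one_apply, sub_eq_neg_add, sum_add_distrib]

lemma IsAlternating.exists_eq_mul_pairedJ_mul_transpose [Fintype ι] {M : Matrix ι ι K}
    (hM : IsAlternating M) (hcard : Fintype.card ι ≤ 2 * Fintype.card κ) :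
    ∃ C : Matrix ι (κ × Fin 2) K, M = C * pairedJ κ K * Cᵀ := by
  obtain ⟨f, g, rfl⟩ := hM.exists_eq_sum_wedge hcard
  exact ⟨_, (of_mul_pairedJ_mul_transpose f g).symm⟩

lemma IsAlternating.pairingSum_sq {M : Matrix (κ × Fin 2) (κ × Fin 2) K} (hM : IsAlternating M) :
    pairingSum M ^ 2 = (2 ^ Fintype.card κ * (Fintype.card κ).factorial) ^ 2 * M.det := by
  obtain ⟨C, rfl⟩ := hM.exists_eq_mul_pairedJ_mul_transpose (κ := κ) (by simp [mul_comm])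
  rw [pairingSum_mul_mul_transpose, pairingSum_pairedJ, det_mul, det_mul, det_transpose,
    det_pairedJ]
  ring

-- The identity is universal: it suffices to check it for a matrix of indeterminates over `ℤ`,
-- inside the fraction field of the polynomial ring.
lemma pairingSum_sub_transpose_sq (U : Matrix (κ × Fin 2) (κ × Fin 2) R) :
    pairingSum (U - Uᵀ) ^ 2 =
      (2 ^ Fintype.card κ * (Fintype.card κ).factorial) ^ 2 * (U - Uᵀ).det := by
  let X := mvPolynomialX (κ × Fin 2) (κ × Fin 2) ℤ
  have hgeneric : pairingSum (X - Xᵀ) ^ 2 =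
      (2 ^ Fintype.card κ * (Fintype.card κ).factorial) ^ 2 * (X - Xᵀ).det := by
    let P := MvPolynomial ((κ × Fin 2) × (κ × Fin 2)) ℤ
    apply IsFractionRing.injective P (FractionRing P)
    simpa only [map_pow, map_mul, map_ofNat, map_natCast, ← pairingSum_map, RingHom.map_det,
      RingHom.mapMatrix_apply, Matrix.map_sub _ (map_sub _), transpose_map] using
      (isAlternating_sub_transpose (X.map (algebraMap P (FractionRing P)))).pairingSum_sq
  let ψ := MvPolynomial.eval₂Hom (Int.castRingHom R) fun p : (κ × Fin 2) × (κ × Fin 2) ↦ U p.1 p.2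
  have hX : X.map ψ = U := mvPolynomialX_map_eval₂ _ U
  simpa only [map_pow, map_mul, map_ofNat, map_natCast, ← pairingSum_map, RingHom.map_det,
    RingHom.mapMatrix_apply, Matrix.map_sub _ (map_sub _), transpose_map, hX] using
    congrArg ψ hgeneric

end Alternating

section Pfaffian

variable {R : Type*} [CommRing R]

lemma transpose_submatrix_self_eq_neg {m n : Type*} {M : Matrix n n R} (hM : Mᵀ = -M)
    (f : m → n) : (M.submatrix f f)ᵀ = -M.submatrix f f := by
  rw [transpose_submatrix, hM]
  rfl

lemma det_eq_zero_of_transpose_eq_neg {n : Type*} [Fintype n] [DecidableEq n]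
    [IsAddTorsionFree R] (hn : Odd (Fintype.card n)) {M : Matrix n n R} (hM : Mᵀ = -M) :
    M.det = 0 := by
  rw [← self_eq_neg]
  calc M.det = (-M).det := by rw [← hM, det_transpose]
    _ = -M.det := by rw [det_neg, hn.neg_one_pow, neg_one_mul]

variable [Algebra ℚ R] {m : ℕ}

/-- The Pfaffian over a commutative `ℚ`-algebra, with the same normalization as `pf`. -/
def pfaffian (M : Matrix (Fin m) (Fin m) R) : R :=
  (2 ^ (m / 2) * (m / 2).factorial : ℚ)⁻¹ •
    ∑ σ : Perm (Fin m), Perm.sign σ •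
      ∏ i : Fin (m / 2), M (σ ⟨2 * i, by lia⟩) (σ ⟨2 * i + 1, by lia⟩)

lemma pf_eq_pfaffian (M : Matrix (Fin m) (Fin m) ℝ) : pf M = pfaffian M := by
  simp [pf, pfaffian, Rat.smul_def, Units.smul_def]

/-- Pairs the index `2 * i` with `2 * i + 1`. -/
def finPairEquiv (hm : Even m) : Fin (m / 2) × Fin 2 ≃ Fin m :=
  finProdFinEquiv.trans (finCongr (Nat.div_two_mul_two_of_even hm))

lemma pfaffian_eq_smul_pairingSum (hm : Even m) (M : Matrix (Fin m) (Fin m) R) :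
    pfaffian M = (2 ^ (m / 2) * (m / 2).factorial : ℚ)⁻¹ •
      pairingSum (M.submatrix (finPairEquiv hm) (finPairEquiv hm)) := by
  have hfst (i : Fin (m / 2)) : finPairEquiv hm (i, 0) = ⟨2 * i, by lia⟩ := by
    ext
    simp [finPairEquiv]
  have hsnd (i : Fin (m / 2)) : finPairEquiv hm (i, 1) = ⟨2 * i + 1, by lia⟩ := by
    ext
    simp [finPairEquiv, add_comm]
  rw [pfaffian, pairingSum]
  congr 1
  refine (Fintype.sum_equiv (finPairEquiv hm).permCongr _ _ fun σ ↦ ?_).symm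
  simp [Equiv.permCongr_apply, ← hfst, ← hsnd]

theorem det_eq_pfaffian_sq (hm : Even m) {M : Matrix (Fin m) (Fin m) R} (hM : Mᵀ = -M) :
    M.det = pfaffian M ^ 2 := by
  let U := (1 / 2 : ℚ) • M.submatrix (finPairEquiv hm) (finPairEquiv hm)
  have hU : M.submatrix (finPairEquiv hm) (finPairEquiv hm) = U - Uᵀ := by
    rw [transpose_smul, transpose_submatrix_self_eq_neg hM, smul_neg, sub_neg_eq_add, ← add_smul,
      add_halves, one_smul]
  have hne : (2 ^ (m / 2) * (m / 2).factorial : ℚ) ≠ 0 := by positivity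
  rw [pfaffian_eq_smul_pairingSum hm, ← det_submatrix_equiv_self (finPairEquiv hm) M, smul_pow, hU,
    pairingSum_sub_transpose_sq, Fintype.card_fin, Algebra.smul_def, ← mul_assoc]
  have hcast : (2 ^ (m / 2) * (m / 2).factorial : R) =
      algebraMap ℚ R (2 ^ (m / 2) * (m / 2).factorial) := by
    simp only [map_mul, map_pow, map_ofNat, map_natCast]
  rw [hcast, ← map_pow, ← map_mul, ← mul_pow, inv_mul_cancel₀ hne, one_pow, map_one, one_mul]

end Pfaffian

theorem det_diagonal_add {n R : Type*} [Fintype n] [DecidableEq n] [CommRing R]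
    (a : n → R) (B : Matrix n n R) :
    (diagonal a + B).det = ∑ s : Finset n,
      (∏ i ∈ s, a i) * (B.submatrix (↑) (↑) : Matrix ↥sᶜ ↥sᶜ R).det := by
  calc (diagonal a + B).det
      = ∑ s : Finset n, detRowAlternating (s.piecewise (diagonal a).row B.row) :=
        detRowAlternating.toMultilinearMap.map_add_univ _ _
    _ = _ := sum_congr rfl fun s _ ↦ ?_
  have hrows : s.piecewise (diagonal a).row B.row =
      s.piecewise (fun i ↦ a i • sᶜ.piecewise B.row (1 : Matrix n n R).row i)
        (sᶜ.piecewise B.row (1 : Matrix n n R).row) := by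
    ext i j
    by_cases hi : i ∈ s <;> simp [hi, diagonal_apply, Matrix.one_apply]
  rw [hrows, ← det_piecewise_one_eq_submatrix_det]
  exact detRowAlternating.toMultilinearMap.map_piecewise_smul _ _ _

theorem det_diagonal_add_antisym_pfaffian_expansion_general {ι R : Type*} [Fintype ι]
    [LinearOrder ι] [CommRing R] [Algebra ℚ R] (a : ι → R) (B : Matrix ι ι R) (hB : Bᵀ = -B) :
    (diagonal a + B).det =
      ∑ I : Finset ι with Even (Fintype.card ι - #I),
        (∏ i ∈ I, a i) *
          pfaffian (B.submatrix (fun i ↦ (Iᶜ.orderIsoOfFin rfl i : ι))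
            (fun i ↦ (Iᶜ.orderIsoOfFin rfl i : ι))) ^ 2 := by
  have := IsAddTorsionFree.of_module_rat R
  rw [det_diagonal_add, sum_filter]
  refine sum_congr rfl fun I _ ↦ ?_
  rw [← card_compl, ← det_submatrix_equiv_self (Iᶜ.orderIsoOfFin rfl).toEquiv, submatrix_submatrix]
  split_ifs with heven
  · rw [← det_eq_pfaffian_sq heven (transpose_submatrix_self_eq_neg hB _)]
    rfl
  · rw [det_eq_zero_of_transpose_eq_neg (by simpa using heven)
      (transpose_submatrix_self_eq_neg hB _), mul_zero]

/-- For `A = diag a` and `B` antisymmetric,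
`det (A + B) = Σ_{I, n-|I| even} (∏_{i∈I} a i) · Pf(B_Î)²`, where `B_Î` is obtained
from `B` by deleting the rows and columns indexed by `I`. -/
theorem det_diagonal_add_antisym_pfaffian_expansion {n : ℕ}
    (a : Fin n → ℝ) (B : Matrix (Fin n) (Fin n) ℝ) (hB : Bᵀ = -B) :
    (Matrix.diagonal a + B).det =
      ∑ I ∈ Finset.univ.filter (fun I : Finset (Fin n) => Even (n - I.card)),
        (∏ i ∈ I, a i) *
          (pf (B.submatrix (fun i => ((Iᶜ.orderIsoOfFin rfl) i : Fin n))
              (fun i => ((Iᶜ.orderIsoOfFin rfl) i : Fin n)))) ^ 2 := by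
  simpa only [pf_eq_pfaffian, Fintype.card_fin] using
    det_diagonal_add_antisym_pfaffian_expansion_general a B hB
end

section
/- Let A be a diagonal matrix with nonnegative real entries and B a real antisymmetric matrix of the same size n, with n even. Then det(A+B) ≥ Pf(B)², and in particular det(A+B) ≥ 0. -/
open Matrix

/-!
Expanding `det (diagonal a + B)` along the diagonal writes it as the sum over index sets `s` of
`∏ i ∉ s, a i` times the principal minor of `B` on `s`. Every principal minor of a real
antisymmetric matrix is nonnegative, and the term `s = univ` is `det B`, so it remains to see that
`det B = Pf(B)²`. Eliminating two rows and columns at a time gives `B = Q J Qᵀ`, where `J` is block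
diagonal with blocks `!![0, 1; -1, 0]`. The Pfaffian sum is the alternatization of a multilinear
form in the rows of `Q`, so it is `det Q` times the Pfaffian sum of `J`. In the latter the nonzero
terms belong to the `2 ^ k * k!` permutations preserving the pairing, and each of them is `1`
because the sign of such a permutation is the product of the signs inside the pairs.
-/

open Equiv Finset

section PrincipalMinors

variable {n R : Type*} [Fintype n] [DecidableEq n]

theorem det_diagonal_add_eq_sum_minors [CommRing R] (a : n → R) (B : Matrix n n R) :
    (diagonal a + B).det =
      ∑ s : Finset n, (∏ i ∈ sᶜ, a i) * (B.submatrix (↑) (↑) : Matrix s s R).det := by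
  have diagonal_rows : (diagonal a).row = fun i => a i • (1 : Matrix n n R).row i := by
    ext i j
    simp [diagonal_apply, one_apply]
  have term (s : Finset n) :
      detRowAlternating (s.piecewise B.row (diagonal a).row) =
        (∏ i ∈ sᶜ, a i) * (B.submatrix (↑) (↑) : Matrix s s R).det := by
    have scaled_rows : s.piecewise B.row (diagonal a).row =
        fun i => (if i ∈ s then 1 else a i) • s.piecewise B.row (1 : Matrix n n R).row i := by
      ext i j
      by_cases hi : i ∈ s <;> simp [diagonal_rows, hi]
    rw [scaled_rows, AlternatingMap.map_smul_univ, smul_eq_mul,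
      ← det_piecewise_one_eq_submatrix_det]
    congr 1
    simp [prod_ite, compl_eq_univ_sdiff, filter_notMem_eq_sdiff]
  calc (diagonal a + B).det = detRowAlternating (B.row + (diagonal a).row) := by
        rw [add_comm]; rfl
    _ = _ := by rw [AlternatingMap.map_add_univ]; exact sum_congr rfl fun s _ => term s

variable [CommRing R] [PartialOrder R] [IsOrderedRing R]

theorem det_le_det_diagonal_add_of_minors_nonneg {a : n → R} {B : Matrix n n R} (ha : 0 ≤ a)
    (hB : ∀ s : Finset n, 0 ≤ (B.submatrix (↑) (↑) : Matrix s s R).det) :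
    B.det ≤ (diagonal a + B).det := by
  have univ_minor : (B.submatrix (↑) (↑) : Matrix (univ : Finset n) (univ : Finset n) R).det =
      B.det :=
    det_submatrix_equiv_self (Equiv.subtypeUnivEquiv mem_univ) B
  rw [det_diagonal_add_eq_sum_minors]
  calc B.det = (∏ i ∈ (univ : Finset n)ᶜ, a i) *
        (B.submatrix (↑) (↑) : Matrix (univ : Finset n) (univ : Finset n) R).det := by
        simp [univ_minor]
    _ ≤ _ := single_le_sum
        (f := fun s => (∏ i ∈ sᶜ, a i) * (B.submatrix (↑) (↑) : Matrix s s R).det)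
        (fun s _ => mul_nonneg (prod_nonneg fun i _ => ha i) (hB s)) (mem_univ _)

end PrincipalMinors

/-- Alternating square matrices. The condition on the diagonal, automatic when `R` has no
`2`-torsion, makes the symplectic normal form available in characteristic two as well. -/
structure IsAlternatingMatrix {ι R : Type*} [AddGroup R] (B : Matrix ι ι R) : Prop where
  apply_swap (i j : ι) : B i j = -B j i
  apply_self (i : ι) : B i i = 0

/-- The matrix of the wedge product `u ∧ v` of two vectors. -/
def wedgeMatrix {ι R : Type*} [CommRing R] (u v : ι → R) : Matrix ι ι R :=
  vecMulVec u v - vecMulVec v u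

/-- The standard symplectic matrix. It is indexed by `κ × Fin 2`, with basis vectors paired as
`(l, 0)`, `(l, 1)`, instead of by `κ ⊕ κ` as `Matrix.J`, because the Pfaffian pairs adjacent
indices. -/
def symplecticMatrix (κ R : Type*) [DecidableEq κ] [CommRing R] :
    Matrix (κ × Fin 2) (κ × Fin 2) R :=
  kronecker 1 !![0, 1; -1, 0]

theorem symplecticMatrix_apply {κ R : Type*} [DecidableEq κ] [CommRing R] (x y : κ × Fin 2) :
    symplecticMatrix κ R x y =
      if x.1 = y.1 then (!![0, 1; -1, 0] : Matrix (Fin 2) (Fin 2) R) x.2 y.2 else 0 := by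
  simp [symplecticMatrix, one_apply]

theorem det_symplecticMatrix (κ R : Type*) [Fintype κ] [DecidableEq κ] [CommRing R] :
    (symplecticMatrix κ R).det = 1 := by
  simp [symplecticMatrix, det_kronecker]

section NormalForm

variable {ι κ : Type*}

theorem wedgeMatrix_apply {R : Type*} [CommRing R] (u v : ι → R) (i j : ι) :
    wedgeMatrix u v i j = u i * v j - v i * u j :=
  rfl

theorem isAlternatingMatrix_of_transpose_eq_neg {R : Type*} [AddGroup R]
    [IsAddTorsionFree R] {B : Matrix ι ι R} (hB : Bᵀ = -B) : IsAlternatingMatrix B where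
  apply_swap i j := congrFun₂ hB j i
  apply_self i := self_eq_neg.mp (congrFun₂ hB i i)

theorem IsAlternatingMatrix.submatrix {ι' R : Type*} [AddGroup R] {B : Matrix ι ι R}
    (hB : IsAlternatingMatrix B) (f : ι' → ι) : IsAlternatingMatrix (B.submatrix f f) :=
  ⟨fun i j => hB.apply_swap (f i) (f j), fun i => hB.apply_self (f i)⟩

theorem IsAlternatingMatrix.sub_wedgeMatrix {R : Type*} [CommRing R] {B : Matrix ι ι R}
    (hB : IsAlternatingMatrix B) (u v : ι → R) : IsAlternatingMatrix (B - wedgeMatrix u v) where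
  apply_swap i j := by simp only [Matrix.sub_apply, wedgeMatrix_apply, hB.apply_swap i j]; ring
  apply_self i := by simp only [Matrix.sub_apply, wedgeMatrix_apply, hB.apply_self i]; ring

variable {K : Type*} [Field K]

theorem IsAlternatingMatrix.exists_sub_wedgeMatrix_rows_eq_zero {B : Matrix ι ι K}
    (hB : IsAlternatingMatrix B) {p q : ι} (hpq : B p q ≠ 0) :
    ∃ u v : ι → K, ∀ i, i = p ∨ i = q ∨ B.row i = 0 → (B - wedgeMatrix u v).row i = 0 := by
  refine ⟨(B p q)⁻¹ • B.row p, B.row q, fun i hi => funext fun j => ?_⟩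
  simp only [row_apply, Matrix.sub_apply, wedgeMatrix_apply, Pi.smul_apply, smul_eq_mul,
    Pi.zero_apply]
  rcases hi with rfl | rfl | hi
  · rw [hB.apply_self, hB.apply_swap q i]
    field_simp
    ring
  · rw [hB.apply_self]
    field_simp
    ring
  · have row_i (j : ι) : B i j = 0 := congrFun hi j
    simp [hB.apply_swap p i, hB.apply_swap q i, row_i]

theorem IsAlternatingMatrix.exists_eq_sum_wedgeMatrix_of_support
    {B : Matrix ι ι K} (hB : IsAlternatingMatrix B) {S : Finset ι} (hS : ∀ i ∉ S, B.row i = 0)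
    {k : ℕ} (hk : S.card ≤ 2 * k) :
    ∃ u v : Fin k → ι → K, B = ∑ l, wedgeMatrix (u l) (v l) := by
  classical
  induction k generalizing B S with
  | zero =>
    have S_empty : S = ∅ := by rw [← card_eq_zero]; lia
    exact ⟨0, 0, Matrix.ext fun i => congrFun (hS i (by simp [S_empty]))⟩
  | succ k ih =>
    obtain rfl | B_ne_zero := eq_or_ne B 0
    · exact ⟨0, 0, by ext; simp [wedgeMatrix_apply, Matrix.sum_apply]⟩
    obtain ⟨p, q, hpq⟩ : ∃ p q, B p q ≠ 0 := by
      by_contra! h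
      exact B_ne_zero (Matrix.ext h)
    have p_mem : p ∈ S := by
      by_contra h
      exact hpq (congrFun (hS p h) q)
    have q_mem : q ∈ S.erase p := by
      refine mem_erase.mpr ⟨?_, ?_⟩
      · rintro rfl
        exact hpq (hB.apply_self q)
      · by_contra h
        exact hpq (by rw [hB.apply_swap, neg_eq_zero]; exact congrFun (hS q h) p)
    obtain ⟨u₀, v₀, rows_eq_zero⟩ := hB.exists_sub_wedgeMatrix_rows_eq_zero hpq
    obtain ⟨u, v, huv⟩ := ih (S := (S.erase p).erase q) (hB.sub_wedgeMatrix u₀ v₀)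
      (fun i hi => rows_eq_zero i (by have := hS i; simp only [mem_erase] at hi; tauto))
      (by rw [card_erase_of_mem q_mem, card_erase_of_mem p_mem]; lia)
    refine ⟨Fin.cons u₀ u, Fin.cons v₀ v, ?_⟩
    simp only [Fin.sum_univ_succ, Fin.cons_zero, Fin.cons_succ, ← huv, add_sub_cancel]

variable [Fintype κ] [DecidableEq κ]

theorem mul_symplecticMatrix_mul_transpose {R : Type*} [CommRing R]
    (Q : Matrix ι (κ × Fin 2) R) :
    Q * symplecticMatrix κ R * Qᵀ =
      ∑ l, wedgeMatrix (fun i => Q i (l, 0)) (fun i => Q i (l, 1)) := by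
  ext i j
  simp only [mul_apply, transpose_apply, symplecticMatrix_apply, Fintype.sum_prod_type,
    Fin.sum_univ_two, Matrix.sum_apply, wedgeMatrix_apply]
  refine sum_congr rfl fun l _ => ?_
  simp only [of_apply, cons_val', cons_val_zero, cons_val_one, cons_val_fin_one, mul_ite, mul_neg,
    mul_one, mul_zero, neg_mul, ite_self, zero_add, add_zero, sum_ite_eq', mem_univ, ↓reduceIte]
  ring

theorem IsAlternatingMatrix.exists_eq_mul_symplecticMatrix_mul_transpose [Fintype ι]
    {B : Matrix ι ι K} (hB : IsAlternatingMatrix B)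
    (hcard : Fintype.card ι ≤ 2 * Fintype.card κ) :
    ∃ Q : Matrix ι (κ × Fin 2) K, B = Q * symplecticMatrix κ K * Qᵀ := by
  classical
  obtain ⟨u, v, huv⟩ := hB.exists_eq_sum_wedgeMatrix_of_support (S := univ) (by simp) hcard
  let e := Fintype.equivFin κ
  refine ⟨of fun i x => ![u (e x.1) i, v (e x.1) i] x.2, ?_⟩
  simp [mul_symplecticMatrix_mul_transpose, huv, ← e.sum_comp]

end NormalForm

section DetNonneg

variable {ι K : Type*} [Fintype ι] [DecidableEq ι]

theorem IsAlternatingMatrix.isSquare_det_of_even [Field K] {B : Matrix ι ι K}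
    (hB : IsAlternatingMatrix B) (hι : Even (Fintype.card ι)) : IsSquare B.det := by
  obtain ⟨k, hk⟩ := hι
  let e : Fin k × Fin 2 ≃ ι := Fintype.equivOfCardEq (by simp [hk, mul_two])
  obtain ⟨Q, hQ⟩ := (hB.submatrix e).exists_eq_mul_symplecticMatrix_mul_transpose (κ := Fin k)
    (by simp [mul_comm])
  refine ⟨Q.det, ?_⟩
  rw [← det_submatrix_equiv_self e B, hQ, det_mul, det_mul, det_transpose, det_symplecticMatrix,
    mul_one]

theorem det_eq_zero_of_transpose_eq_neg_of_odd {R : Type*} [CommRing R] [IsAddTorsionFree R]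
    {B : Matrix ι ι R} (hB : Bᵀ = -B)
    (hι : Odd (Fintype.card ι)) : B.det = 0 := by
  have det_eq_neg_det : B.det = -B.det := by
    conv_lhs => rw [← det_transpose, hB, det_neg, hι.neg_one_pow, neg_one_mul]
  exact self_eq_neg.mp det_eq_neg_det

variable [Field K] [LinearOrder K] [IsStrictOrderedRing K]

theorem det_nonneg_of_transpose_eq_neg {B : Matrix ι ι K} (hB : Bᵀ = -B) : 0 ≤ B.det := by
  rcases Nat.even_or_odd (Fintype.card ι) with h_even | h_odd
  · exact ((isAlternatingMatrix_of_transpose_eq_neg hB).isSquare_det_of_even h_even).nonneg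
  · exact (det_eq_zero_of_transpose_eq_neg_of_odd hB h_odd).ge

theorem det_le_det_diagonal_add_of_transpose_eq_neg {a : ι → K} (ha : 0 ≤ a) {B : Matrix ι ι K}
    (hB : Bᵀ = -B) : B.det ≤ (diagonal a + B).det :=
  det_le_det_diagonal_add_of_minors_nonneg ha fun s => det_nonneg_of_transpose_eq_neg <| by
    rw [transpose_submatrix, hB]; rfl

end DetNonneg

section WreathPerm

variable {κ β : Type*}

/-- The permutation of `κ × β` given by an element of the wreath product of `Perm β` by `Perm κ`:
it moves the fibers of `Prod.fst` by `π` and acts by `ε l` inside the fiber over `l`. -/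
def wreathPerm (w : Perm κ × (κ → Perm β)) : Perm (κ × β) :=
  prodCongrLeft (fun _ => w.1) * prodCongrRight w.2

theorem wreathPerm_apply (w : Perm κ × (κ → Perm β)) (l : κ) (b : β) :
    wreathPerm w (l, b) = (w.1 l, w.2 l b) :=
  rfl

theorem wreathPerm_injective [Nonempty β] :
    Function.Injective (wreathPerm : Perm κ × (κ → Perm β) → Perm (κ × β)) := by
  intro w w' h
  have apply_eq (l : κ) (b : β) : (w.1 l, w.2 l b) = (w'.1 l, w'.2 l b) := congrArg (· (l, b)) h
  exact Prod.ext (Equiv.ext fun l => congrArg Prod.fst (apply_eq l (Classical.arbitrary β)))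
    (funext fun l => Equiv.ext fun b => congrArg Prod.snd (apply_eq l b))

theorem sign_wreathPerm [Fintype κ] [DecidableEq κ] [Fintype β] [DecidableEq β]
    (w : Perm κ × (κ → Perm β)) :
    (wreathPerm w).sign = w.1.sign ^ Fintype.card β * ∏ l, (w.2 l).sign := by
  rw [wreathPerm, Perm.sign_mul, Perm.sign_prodCongrLeft, Perm.sign_prodCongrRight, prod_const,
    card_univ]

theorem mem_range_wreathPerm [Finite κ] [Finite β] [Nonempty β] {σ : Perm (κ × β)}
    (hσ : ∀ l b c, (σ (l, b)).1 = (σ (l, c)).1) : σ ∈ Set.range wreathPerm := by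
  let b₀ : β := Classical.arbitrary β
  let p : κ → κ := fun l => (σ (l, b₀)).1
  let f : κ → β → β := fun l b => (σ (l, b)).2
  have σ_apply (l : κ) (b : β) : σ (l, b) = (p l, f l b) := Prod.ext (hσ l b b₀) rfl
  have p_surjective : Function.Surjective p := fun m => by
    obtain ⟨⟨l, b⟩, hlb⟩ := σ.surjective (m, b₀)
    exact ⟨l, congrArg Prod.fst ((σ_apply l b).symm.trans hlb)⟩
  have f_injective (l : κ) : Function.Injective (f l) := fun b c hbc => by
    have : σ (l, b) = σ (l, c) := by rw [σ_apply, σ_apply, hbc]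
    exact congrArg Prod.snd (σ.injective this)
  exact ⟨(ofBijective p (Finite.surjective_iff_bijective.mp p_surjective),
    fun l => ofBijective (f l) (Finite.injective_iff_bijective.mp (f_injective l))),
    Equiv.ext fun x => (σ_apply x.1 x.2).symm⟩

end WreathPerm

section PairProdMultilinear

variable {ι κ R : Type*} [Fintype ι] [Fintype κ] [CommRing R]

/-- The bilinear form `(x, y) ↦ x M yᵀ`, as a multilinear map on pairs of vectors. -/
def pairMultilinear (M : Matrix ι ι R) : MultilinearMap R (fun _ : Fin 2 => ι → R) R where
  toFun v := v 0 ⬝ᵥ M *ᵥ v 1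
  map_update_add' v i x y := by
    fin_cases i <;> simp [add_dotProduct, mulVec_add, dotProduct_add]
  map_update_smul' v i c x := by
    fin_cases i <;> simp [mulVec_smul]

variable (κ) in
/-- The multilinear map `v ↦ ∏ l, v (l, 0) M v (l, 1)ᵀ`, whose alternatization is the Pfaffian sum
of `Q M Qᵀ` as a function of the rows of `Q`. -/
def pairProdMultilinear (M : Matrix ι ι R) :
    MultilinearMap R (fun _ : κ × Fin 2 => ι → R) R :=
  ((MultilinearMap.mkPiAlgebra R κ R).compMultilinearMap
    fun _ => pairMultilinear M).domDomCongr (sigmaEquivProd κ (Fin 2))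

theorem pairProdMultilinear_row (M : Matrix ι ι R) (Q : Matrix (κ × Fin 2) ι R) :
    pairProdMultilinear κ M Q.row = ∏ l, (Q * M * Qᵀ) (l, 0) (l, 1) := by
  refine prod_congr rfl fun l _ => ?_
  rw [Matrix.mul_assoc]
  rfl

end PairProdMultilinear

section PfaffianSum

variable {κ R : Type*} [Fintype κ] [DecidableEq κ] [CommRing R]

/-- The Pfaffian before normalization: for an alternating matrix each perfect matching of
`κ × Fin 2` contributes `2 ^ card κ * (card κ)!` equal terms to this sum. -/
def pfaffianSum (M : Matrix (κ × Fin 2) (κ × Fin 2) R) : R :=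
  ∑ σ : Perm (κ × Fin 2), ((σ.sign : ℤ) : R) * ∏ l, M (σ (l, 0)) (σ (l, 1))

theorem alternatization_pairProdMultilinear_row {ι : Type*} [Fintype ι] (M : Matrix ι ι R)
    (Q : Matrix (κ × Fin 2) ι R) :
    (pairProdMultilinear κ M).alternatization Q.row = pfaffianSum (Q * M * Qᵀ) := by
  simp only [MultilinearMap.alternatization_apply, MultilinearMap.domDomCongr_apply, pfaffianSum,
    Units.smul_def, zsmul_eq_mul]
  exact sum_congr rfl fun σ _ => congrArg _ (pairProdMultilinear_row M (Q.submatrix σ id))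

theorem pfaffianSum_mul_mul_transpose (Q M : Matrix (κ × Fin 2) (κ × Fin 2) R) :
    pfaffianSum (Q * M * Qᵀ) = Q.det * pfaffianSum M := by
  have basis_rows : ⇑(Pi.basisFun R (κ × Fin 2)) = (1 : Matrix _ _ R).row := by
    ext i j
    simp [one_apply, Pi.single_apply, eq_comm]
  have alternatization_basis :
      (pairProdMultilinear κ M).alternatization (Pi.basisFun R (κ × Fin 2)) = pfaffianSum M := by
    rw [basis_rows, alternatization_pairProdMultilinear_row, Matrix.one_mul, transpose_one,
      Matrix.mul_one]
  rw [← alternatization_pairProdMultilinear_row,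
    AlternatingMap.eq_smul_basis_det (Pi.basisFun R (κ × Fin 2))
      (pairProdMultilinear κ M).alternatization,
    alternatization_basis, Pi.basisFun_det, AlternatingMap.smul_apply, smul_eq_mul, mul_comm]
  rfl

theorem symplecticMatrix_prod_wreathPerm (w : Perm κ × (κ → Perm (Fin 2))) :
    ∏ l, symplecticMatrix κ R (wreathPerm w (l, 0)) (wreathPerm w (l, 1)) =
      (((wreathPerm w).sign : ℤ) : R) := by
  have block_apply (ε : Perm (Fin 2)) :
      (!![0, 1; -1, 0] : Matrix (Fin 2) (Fin 2) R) (ε 0) (ε 1) = ((ε.sign : ℤ) : R) := by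
    obtain rfl | rfl : ε = 1 ∨ ε = swap 0 1 := by decide +revert
    · simp
    · simp
  simp [symplecticMatrix_apply, wreathPerm_apply, sign_wreathPerm, block_apply]

theorem pfaffianSum_symplecticMatrix :
    pfaffianSum (symplecticMatrix κ R) =
      2 ^ Fintype.card κ * ((Fintype.card κ).factorial : R) := by
  have vanish (σ : Perm (κ × Fin 2)) (hσ : σ ∉ Set.range wreathPerm) :
      ((σ.sign : ℤ) : R) * ∏ l, symplecticMatrix κ R (σ (l, 0)) (σ (l, 1)) = 0 := by
    obtain ⟨l, hl⟩ : ∃ l, (σ (l, 0)).1 ≠ (σ (l, 1)).1 := by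
      by_contra! h
      exact hσ (mem_range_wreathPerm fun l b c => by fin_cases b <;> fin_cases c <;> simp [h l])
    rw [prod_eq_zero (mem_univ l) (by rw [symplecticMatrix_apply, if_neg hl]), mul_zero]
  have eq_one (w : Perm κ × (κ → Perm (Fin 2))) :
      1 = (((wreathPerm w).sign : ℤ) : R) *
        ∏ l, symplecticMatrix κ R (wreathPerm w (l, 0)) (wreathPerm w (l, 1)) := by
    rw [symplecticMatrix_prod_wreathPerm]
    norm_cast
    simp
  rw [pfaffianSum, ← Fintype.sum_of_injective _ wreathPerm_injective _ _ vanish eq_one]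
  simp [Fintype.card_perm, mul_comm]

theorem IsAlternatingMatrix.pfaffianSum_sq {K : Type*} [Field K]
    {B : Matrix (κ × Fin 2) (κ × Fin 2) K} (hB : IsAlternatingMatrix B) :
    pfaffianSum B ^ 2 = (2 ^ Fintype.card κ * ((Fintype.card κ).factorial : K)) ^ 2 * B.det := by
  obtain ⟨Q, rfl⟩ := hB.exists_eq_mul_symplecticMatrix_mul_transpose (κ := κ) (by simp [mul_comm])
  rw [pfaffianSum_mul_mul_transpose, pfaffianSum_symplecticMatrix, det_mul, det_mul, det_transpose,
    det_symplecticMatrix]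
  ring

end PfaffianSum

/-- The enumeration `(l, s) ↦ 2 * l + s` behind the pairing used by `pf`. -/
def finHalfProdEquiv {n : ℕ} (hn : Even n) : Fin (n / 2) × Fin 2 ≃ Fin n :=
  finProdFinEquiv.trans (finCongr (Nat.div_mul_cancel hn.two_dvd))

theorem finHalfProdEquiv_apply {n : ℕ} (hn : Even n) (l : Fin (n / 2)) (s : Fin 2) :
    (finHalfProdEquiv hn (l, s) : ℕ) = 2 * l + s := by
  simp [finHalfProdEquiv, add_comm]

theorem pf_eq_pfaffianSum {n : ℕ} (hn : Even n) (B : Matrix (Fin n) (Fin n) ℝ) :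
    pf B = (2 ^ (n / 2) * ((n / 2).factorial : ℝ))⁻¹ *
      pfaffianSum (B.submatrix (finHalfProdEquiv hn) (finHalfProdEquiv hn)) := by
  let e := finHalfProdEquiv hn
  have e_zero (l : Fin (n / 2)) : ⟨2 * l, by lia⟩ = e (l, 0) :=
    Fin.ext (finHalfProdEquiv_apply hn l 0).symm
  have e_one (l : Fin (n / 2)) : ⟨2 * l + 1, by lia⟩ = e (l, 1) :=
    Fin.ext (finHalfProdEquiv_apply hn l 1).symm
  rw [pf, pfaffianSum, one_div, ← e.permCongr.sum_comp]
  simp only [e_zero, e_one, Perm.sign_permCongr, permCongr_apply, symm_apply_apply, submatrix_apply,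
    e]

theorem pf_sq_eq_det {n : ℕ} (hn : Even n) {B : Matrix (Fin n) (Fin n) ℝ} (hB : Bᵀ = -B) :
    pf B ^ 2 = B.det := by
  have normalization_ne_zero : (2 ^ (n / 2) * ((n / 2).factorial : ℝ)) ≠ 0 := by positivity
  have hB' := (isAlternatingMatrix_of_transpose_eq_neg hB).submatrix (finHalfProdEquiv hn)
  rw [pf_eq_pfaffianSum hn, mul_pow, hB'.pfaffianSum_sq, Fintype.card_fin, inv_pow,
    inv_mul_cancel_left₀ (pow_ne_zero 2 normalization_ne_zero), det_submatrix_equiv_self]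

/-- For `A` diagonal with nonnegative entries and `B` real antisymmetric, of even size `n`,
`det (A + B) ≥ Pf(B)² ≥ 0`. -/
theorem det_diagonal_add_antisym_ge_pf_sq {n : ℕ} (hn : Even n)
    (a : Fin n → ℝ) (ha : ∀ i, 0 ≤ a i)
    (B : Matrix (Fin n) (Fin n) ℝ) (hB : Bᵀ = -B) :
    (pf B) ^ 2 ≤ (Matrix.diagonal a + B).det ∧
      0 ≤ (Matrix.diagonal a + B).det := by
  have pf_sq_le : pf B ^ 2 ≤ (Matrix.diagonal a + B).det :=
    (pf_sq_eq_det hn hB).trans_le (det_le_det_diagonal_add_of_transpose_eq_neg ha hB)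
  exact ⟨pf_sq_le, (sq_nonneg (pf B)).trans pf_sq_le⟩
end
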